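/- Let c : ℕ → ℕ be the function where c(s) is the number of magic squares of order 3 with magic number 3s. Then, as an identity of formal power series in t over the integers, (1−t)·(1−t²)·(1−t³)·(Σ_{s≥0} c(s)·t^s) = 8t⁴·(1+2t). -/

import Mathlib

open Matrix Finset

/-- `IsMagic M m` : every row sum, column sum, and both diagonal sums of the
3×3 matrix `M` of nonnegative integers equal `m`, and all entries are distinct. -/
def IsMagic (M : Matrix (Fin 3) (Fin 3) ℕ) (m : ℕ) : Prop :=
  (Function.Injective fun p : Fin 3 × Fin 3 => M p.1 p.2) ∧
  (∀ i, ∑ j, M i j = m) ∧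
  (∀ j, ∑ i, M i j = m) ∧
  (∑ i, M i i = m) ∧
  (∑ i, M i i.rev = m)

/-- A magic square of order 3. -/
def IsMagicSquare (M : Matrix (Fin 3) (Fin 3) ℕ) : Prop := ∃ m, IsMagic M m

/-!
By Lucas's parametrization, the integer squares with all line sums `3 * s` have as entries the nine
numbers `s + e * x + f * y` with `e, f ∈ {-1, 0, 1}`, for arbitrary offsets `x`, `y`. The entries
are nonnegative iff `|x| + |y| ≤ s`, and distinct iff `(x, y)` lies on none of the eight lines
`x = 0`, `y = 0`, `x = ± y`, `x = ± 2 * y`, `y = ± 2 * x`. The eight symmetries of the square act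
freely on such offsets, with fundamental domain `0 < y < x`, `x ≠ 2 * y`. The line `x = 2 * y` cuts
this domain into two unimodular cones, whose points have the generating functions
`t⁴ / ((1 - t)² (1 - t³))` and `t⁵ / ((1 - t) (1 - t²) (1 - t³))`. Their sum is
`t⁴ (1 + 2 * t) / ((1 - t) (1 - t²) (1 - t³))`.
-/

theorem ncard_eq_two_mul_ncard_sep {α : Type*} {S : Set α} {P : α → Prop} {f : α → α}
    (hf : f.Involutive) (hS : Set.MapsTo f S S) (hP : ∀ a ∈ S, P (f a) ↔ ¬P a) :
    S.ncard = 2 * {a ∈ S | P a}.ncard := by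
  have himage : f '' {a ∈ S | P a} = S \ {a ∈ S | P a} := by
    ext a
    constructor
    · rintro ⟨b, ⟨hbS, hbP⟩, rfl⟩
      exact ⟨hS hbS, fun h => (hP b hbS).1 h.2 hbP⟩
    · rintro ⟨haS, haP⟩
      exact ⟨f a, ⟨hS haS, (hP a haS).2 fun h => haP ⟨haS, h⟩⟩, hf a⟩
  have hencard : S.encard = 2 * {a ∈ S | P a}.encard := by
    rw [← Set.encard_sdiff_add_encard_of_subset (Set.sep_subset S P), ← himage,
      hf.injective.encard_image, two_mul]
  simp [Set.ncard, hencard]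

section Denumerant

open PowerSeries

variable {ι R : Type*} [CommRing R]

theorem one_sub_X_pow_mul_expand_mk_one {d : ℕ} (hd : d ≠ 0) :
    (1 - X ^ d) * expand d hd (mk 1 : R⟦X⟧) = 1 := by
  simpa [mul_comm] using congrArg (expand d hd) (mk_one_mul_one_sub_eq_one R)

variable [Fintype ι] {w : ι → ℕ}

theorem coeff_prod_expand_mk_one (hw : ∀ i, w i ≠ 0) (n : ℕ) :
    coeff n (∏ i, expand (w i) (hw i) (mk 1 : R⟦X⟧)) = {x : ι → ℕ | ∑ i, w i * x i = n}.ncard := by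
  classical
  let scale (x : ι → ℕ) : ι →₀ ℕ := Finsupp.equivFunOnFinite.symm fun i => w i * x i
  have hinj : scale.Injective := by
    intro x y hxy
    ext i
    simpa [scale, hw] using DFunLike.congr_fun hxy i
  have himage : scale '' {x | ∑ i, w i * x i = n} =
      ({l ∈ finsuppAntidiag univ n | ∀ i, w i ∣ l i} : Finset (ι →₀ ℕ)) := by
    ext l
    simp only [coe_filter, mem_finsuppAntidiag', Set.mem_ofPred_eq]
    constructor
    · rintro ⟨x, hx, rfl⟩
      simpa [scale, Finsupp.sum_fintype] using hx
    · rintro ⟨⟨hsum, -⟩, hdvd⟩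
      choose x hx using hdvd
      have hscale : scale x = l := by
        ext i
        simp [scale, hx]
      refine ⟨x, ?_, hscale⟩
      simpa [← hx, Finsupp.sum_fintype] using hsum
  rw [← Set.ncard_image_of_injective _ hinj, himage, Set.ncard_coe_finset, coeff_prod]
  simp [coeff_expand, prod_ite_zero]

theorem prod_one_sub_X_pow_mul_mk_ncard (hw : ∀ i, w i ≠ 0) (d : ℕ) :
    (∏ i, (1 - X ^ w i)) * mk (fun n => ({x : ι → ℕ | d + ∑ i, w i * x i = n}.ncard : R)) =
      X ^ d := by
  have hmk : mk (fun n => ({x : ι → ℕ | d + ∑ i, w i * x i = n}.ncard : R)) =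
      X ^ d * ∏ i, expand (w i) (hw i) (mk 1) := by
    ext n
    rw [coeff_mk, coeff_X_pow_mul']
    split_ifs with hdn
    · obtain ⟨k, rfl⟩ := Nat.exists_eq_add_of_le hdn
      simp [coeff_prod_expand_mk_one]
    · have hne (k : ℕ) : d + k ≠ n := by omega
      simp [hne]
  rw [hmk, mul_left_comm, ← prod_mul_distrib]
  simp [one_sub_X_pow_mul_expand_mk_one]

end Denumerant

/-- The line-sum conditions of `IsMagic`, over any additive commutative monoid, so that they can be
used for integer matrices. -/
def HasLineSums {R : Type*} [AddCommMonoid R] (M : Matrix (Fin 3) (Fin 3) R) (m : R) : Prop :=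
  (∀ i, ∑ j, M i j = m) ∧ (∀ j, ∑ i, M i j = m) ∧ ∑ i, M i i = m ∧ ∑ i, M i i.rev = m

/-- Lucas's parametrization of the squares with equal line sums, by the centre `c` and the offsets
`x`, `y` of the upper corners from it. The entries are the nine elements `c + e * x + f * y` with
`e, f ∈ {-1, 0, 1}`. -/
def lucasSquare {R : Type*} [AddCommGroup R] (c x y : R) : Matrix (Fin 3) (Fin 3) R :=
  !![c + x, c - x - y, c + y;
     c - x + y, c, c + x - y;
     c - y, c + x + y, c - x]

/-- The offsets `x`, `y` for which the entries of `lucasSquare c x y` are distinct: no nontrivial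
relation `u * x + v * y = 0` holds with integer coefficients of absolute value at most `2`. -/
def IsGenericOffset {R : Type*} [Ring R] (x y : R) : Prop :=
  x ≠ 0 ∧ y ≠ 0 ∧ x ≠ y ∧ x ≠ -y ∧ x ≠ 2 * y ∧ x ≠ -(2 * y) ∧ y ≠ 2 * x ∧ y ≠ -(2 * x)

section LucasSquare

variable {R : Type*} [CommRing R]

theorem isGenericOffset_neg_left {x y : R} : IsGenericOffset (-x) y ↔ IsGenericOffset x y := by
  grind [IsGenericOffset]

theorem isGenericOffset_comm {x y : R} : IsGenericOffset x y ↔ IsGenericOffset y x := by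
  grind [IsGenericOffset]

theorem isGenericOffset_neg_right {x y : R} : IsGenericOffset x (-y) ↔ IsGenericOffset x y := by
  rw [isGenericOffset_comm, isGenericOffset_neg_left, isGenericOffset_comm]

theorem hasLineSums_lucasSquare (c x y : R) : HasLineSums (lucasSquare c x y) (3 * c) := by
  simp only [HasLineSums, lucasSquare, Fin.forall_fin_succ, Fin.sum_univ_three, Matrix.of_apply,
    Matrix.cons_val, Fin.isValue, Fin.reduceRev, Fin.reduceSucc, Fin.succ_zero_eq_one,
    IsEmpty.forall_iff, and_true]
  grind

theorem HasLineSums.eq_lucasSquare [NoZeroDivisors R] [CharZero R]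
    {M : Matrix (Fin 3) (Fin 3) R} {c : R} (h : HasLineSums M (3 * c)) :
    M = lucasSquare c (M 0 0 - c) (M 0 2 - c) := by
  obtain ⟨hrow, hcol, hdiag, hanti⟩ := h
  simp only [Fin.forall_fin_succ, Fin.sum_univ_three, Fin.isValue, Fin.reduceRev, Fin.reduceSucc,
    Fin.succ_zero_eq_one, IsEmpty.forall_iff, and_true] at hrow hcol hdiag hanti
  have hcenter : M 1 1 = c := by
    refine mul_left_cancel₀ (OfNat.ofNat_ne_zero 3 : (3 : R) ≠ 0) ?_
    linear_combination hrow.2.1 + hdiag + hanti - hcol.1 - hcol.2.2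
  ext i j
  fin_cases i <;> fin_cases j <;>
    simp only [lucasSquare, Matrix.of_apply, Matrix.cons_val, Fin.zero_eta, Fin.mk_one,
      Fin.reduceFinMk, Fin.isValue] <;>
    grind

theorem lucasSquare_injective_iff [NoZeroDivisors R] [CharZero R] {c x y : R} :
    (Function.Injective fun p : Fin 3 × Fin 3 => lucasSquare c x y p.1 p.2) ↔
      IsGenericOffset x y := by
  constructor
  · intro h
    have hne (i j k l : Fin 3) (hij : (i, j) ≠ (k, l)) :
        lucasSquare c x y i j ≠ lucasSquare c x y k l := h.ne hij
    have hx := hne 0 0 1 1 (by decide)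
    have hy := hne 0 2 1 1 (by decide)
    have hxy := hne 0 0 0 2 (by decide)
    have hx_neg_y := hne 0 0 2 0 (by decide)
    have hx_two_y := hne 0 2 1 2 (by decide)
    have hx_neg_two_y := hne 0 1 0 2 (by decide)
    have hy_two_x := hne 0 0 1 0 (by decide)
    have hy_neg_two_x := hne 0 0 0 1 (by decide)
    simp only [lucasSquare, Matrix.of_apply, Matrix.cons_val] at *
    refine ⟨?_, ?_, ?_, ?_, ?_, ?_, ?_, ?_⟩ <;> grind
  · rintro ⟨hx, hy, hxy, hx_neg_y, hx_two_y, hx_neg_two_y, hy_two_x, hy_neg_two_x⟩ ⟨i, j⟩ ⟨k, l⟩ h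
    fin_cases i <;> fin_cases j <;> fin_cases k <;> fin_cases l <;>
      first
      | rfl
      | simp only [lucasSquare, Matrix.of_apply, Matrix.cons_val, Fin.zero_eta, Fin.mk_one,
          Fin.reduceFinMk, Fin.isValue] at h
        grind

theorem lucasSquare_nonneg_iff [LinearOrder R] [IsStrictOrderedRing R] {c x y : R} :
    (∀ i j, 0 ≤ lucasSquare c x y i j) ↔ |x| + |y| ≤ c := by
  constructor
  · intro h
    have hmm := h 0 1
    have hmp := h 1 0
    have hpm := h 1 2
    have hpp := h 2 1
    simp only [lucasSquare, Matrix.of_apply, Matrix.cons_val] at hmm hmp hpm hpp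
    cases abs_cases x <;> cases abs_cases y <;> linarith
  · intro h i j
    have hx := neg_abs_le x
    have hx' := le_abs_self x
    have hy := neg_abs_le y
    have hy' := le_abs_self y
    fin_cases i <;> fin_cases j <;>
      simp only [lucasSquare, Matrix.of_apply, Matrix.cons_val, Fin.zero_eta, Fin.mk_one,
        Fin.reduceFinMk, Fin.isValue] <;>
      linarith

end LucasSquare

theorem isMagic_iff_map_natCast {R : Type*} [AddCommMonoidWithOne R] [CharZero R]
    {M : Matrix (Fin 3) (Fin 3) ℕ} {m : ℕ} :
    IsMagic M m ↔
      (Function.Injective fun p : Fin 3 × Fin 3 => M.map (Nat.cast : ℕ → R) p.1 p.2) ∧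
        HasLineSums (M.map (Nat.cast : ℕ → R)) (m : R) := by
  have hinj := (Nat.cast_injective (R := R)).of_comp_iff fun p : Fin 3 × Fin 3 => M p.1 p.2
  simp only [IsMagic, HasLineSums, map_apply, ← hinj, ← Nat.cast_sum, Nat.cast_inj,
    Function.comp_def]

theorem IsMagic.map_natCast_eq_lucasSquare {R : Type*} [CommRing R] [NoZeroDivisors R] [CharZero R]
    {M : Matrix (Fin 3) (Fin 3) ℕ} {s : ℕ} (hM : IsMagic M (3 * s)) :
    M.map (Nat.cast : ℕ → R) = lucasSquare (s : R) (M 0 0 - s) (M 0 2 - s) := by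
  have hsums := (isMagic_iff_map_natCast (R := R).1 hM).2
  push_cast at hsums
  exact hsums.eq_lucasSquare

/-- The offsets `(x, y)` for which `lucasSquare s x y` is a magic square: its entries are distinct,
and the smallest of them, `s - |x| - |y|`, is nonnegative. -/
def admissibleOffsets (s : ℕ) : Set (ℤ × ℤ) :=
  {p | IsGenericOffset p.1 p.2 ∧ |p.1| + |p.2| ≤ s}

theorem isMagic_iff_mem_admissibleOffsets {M : Matrix (Fin 3) (Fin 3) ℕ} {s : ℕ} {x y : ℤ}
    (hM : M.map (Nat.cast : ℕ → ℤ) = lucasSquare (s : ℤ) x y) :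
    IsMagic M (3 * s) ↔ (x, y) ∈ admissibleOffsets s := by
  have hnonneg : ∀ i j, 0 ≤ lucasSquare (s : ℤ) x y i j := by simp [← hM]
  rw [isMagic_iff_map_natCast (R := ℤ), hM, lucasSquare_injective_iff]
  simp [admissibleOffsets, hasLineSums_lucasSquare, lucasSquare_nonneg_iff.1 hnonneg]

theorem ncard_isMagic (s : ℕ) :
    {M | IsMagic M (3 * s)}.ncard = (admissibleOffsets s).ncard := by
  refine Set.BijOn.ncard_eq (f := fun M => ((M 0 0 : ℤ) - s, (M 0 2 : ℤ) - s)) ⟨?_, ?_, ?_⟩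
  · intro M hM
    exact (isMagic_iff_mem_admissibleOffsets hM.map_natCast_eq_lucasSquare).1 hM
  · intro M hM N hN hMN
    simp only [Prod.mk.injEq] at hMN
    apply Matrix.map_injective (Nat.cast_injective (R := ℤ))
    simp only [IsMagic.map_natCast_eq_lucasSquare hM, IsMagic.map_natCast_eq_lucasSquare hN, hMN]
  · rintro ⟨x, y⟩ hxy
    choose M hM using fun i j => Int.eq_ofNat_of_zero_le (lucasSquare_nonneg_iff.2 hxy.2 i j)
    have hmap : (Matrix.of M).map (Nat.cast : ℕ → ℤ) = lucasSquare (s : ℤ) x y := by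
      ext i j
      exact (hM i j).symm
    refine ⟨Matrix.of M, (isMagic_iff_mem_admissibleOffsets hmap).2 hxy, ?_⟩
    simp [← hM, lucasSquare]

theorem neg_fst_mem_admissibleOffsets {s : ℕ} {x y : ℤ} :
    (-x, y) ∈ admissibleOffsets s ↔ (x, y) ∈ admissibleOffsets s := by
  simp [admissibleOffsets, isGenericOffset_neg_left]

theorem neg_snd_mem_admissibleOffsets {s : ℕ} {x y : ℤ} :
    (x, -y) ∈ admissibleOffsets s ↔ (x, y) ∈ admissibleOffsets s := by
  simp [admissibleOffsets, isGenericOffset_neg_right]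

theorem swap_mem_admissibleOffsets {s : ℕ} {x y : ℤ} :
    (y, x) ∈ admissibleOffsets s ↔ (x, y) ∈ admissibleOffsets s := by
  simp [admissibleOffsets, isGenericOffset_comm (x := y), add_comm]

theorem ncard_admissibleOffsets (s : ℕ) :
    (admissibleOffsets s).ncard =
      8 * {p ∈ admissibleOffsets s | 0 < p.1 ∧ 0 < p.2 ∧ p.2 < p.1}.ncard := by
  have hneg_fst : (admissibleOffsets s).ncard = 2 * {p ∈ admissibleOffsets s | 0 < p.1}.ncard := by
    refine ncard_eq_two_mul_ncard_sep (f := fun p => (-p.1, p.2)) (fun p => by simp)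
      (fun p => neg_fst_mem_admissibleOffsets.2) ?_
    rintro ⟨x, y⟩ ⟨⟨hx, -⟩, -⟩
    grind
  have hneg_snd : {p ∈ admissibleOffsets s | 0 < p.1}.ncard =
      2 * {p ∈ {p ∈ admissibleOffsets s | 0 < p.1} | 0 < p.2}.ncard := by
    refine ncard_eq_two_mul_ncard_sep (f := fun p => (p.1, -p.2)) (fun p => by simp)
      (fun p => And.imp_left neg_snd_mem_admissibleOffsets.2) ?_
    rintro ⟨x, y⟩ ⟨⟨⟨-, hy, -⟩, -⟩, -⟩
    grind
  have hswap : {p ∈ {p ∈ admissibleOffsets s | 0 < p.1} | 0 < p.2}.ncard =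
      2 * {p ∈ {p ∈ {p ∈ admissibleOffsets s | 0 < p.1} | 0 < p.2} | p.2 < p.1}.ncard := by
    refine ncard_eq_two_mul_ncard_sep Prod.swap_swap ?_ ?_
    · rintro p ⟨⟨hp, hx⟩, hy⟩
      exact ⟨⟨swap_mem_admissibleOffsets.2 hp, hy⟩, hx⟩
    · rintro ⟨x, y⟩ ⟨⟨⟨⟨-, -, hxy, -⟩, -⟩, -⟩, -⟩
      grind
  rw [hneg_fst, hneg_snd, hswap]
  simp only [Set.mem_ofPred_eq, and_assoc]
  ring

/-- The admissible offsets with `0 < 2 * y < x`. The cone `0 ≤ 2 * y ≤ x` is unimodular, so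
that its interior lattice points are parametrized by two natural numbers. -/
def steepCone (s : ℕ) : Set (ℤ × ℤ) := {p | 0 < p.2 ∧ 2 * p.2 < p.1 ∧ p.1 + p.2 ≤ s}

/-- The admissible offsets with `0 < y < x < 2 * y`, which complement those of
`steepCone` in the fundamental domain of the symmetries. This cone is unimodular too. -/
def flatCone (s : ℕ) : Set (ℤ × ℤ) := {p | p.2 < p.1 ∧ p.1 < 2 * p.2 ∧ p.1 + p.2 ≤ s}

theorem sep_admissibleOffsets_eq_union (s : ℕ) :
    {p ∈ admissibleOffsets s | 0 < p.1 ∧ 0 < p.2 ∧ p.2 < p.1} = steepCone s ∪ flatCone s := by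
  ext p
  simp only [admissibleOffsets, IsGenericOffset, steepCone, flatCone, Set.mem_ofPred_eq,
    Set.mem_union]
  constructor
  · rintro ⟨⟨hgeneric, hle⟩, hx, hy, hyx⟩
    rw [abs_of_pos hx, abs_of_pos hy] at hle
    omega
  · intro h
    have hx : 0 < p.1 := by omega
    have hy : 0 < p.2 := by omega
    rw [abs_of_pos hx, abs_of_pos hy]
    omega

theorem disjoint_steepCone_flatCone (s : ℕ) : Disjoint (steepCone s) (flatCone s) :=
  Set.disjoint_left.2 fun _ hsteep hflat => hsteep.2.1.not_gt hflat.2.1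

theorem finite_steepCone_union_flatCone (s : ℕ) : (steepCone s ∪ flatCone s).Finite :=
  (Set.finite_Icc (0, 0) ((s : ℤ), (s : ℤ))).subset fun p hp => by
    simp only [steepCone, flatCone, Set.mem_ofPred_eq, Set.mem_union] at hp
    simp only [Set.mem_Icc, Prod.le_def]
    omega

theorem ncard_steepCone (s : ℕ) :
    (steepCone s).ncard = {x : Fin 3 → ℕ | 4 + ∑ i, ![1, 1, 3] i * x i = s}.ncard := by
  symm
  -- The edges are spanned by `(1, 0)` and `(2, 1)`; the coordinate `x 0` is the slack `s - a - b`.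
  let f (x : Fin 3 → ℕ) : ℤ × ℤ := (x 1 + 2 * x 2 + 3, x 2 + 1)
  simp only [steepCone, Fin.sum_univ_three, Matrix.cons_val]
  refine Set.BijOn.ncard_eq (f := f) ⟨?_, ?_, ?_⟩
  · intro x hx
    simp only [f, Set.mem_ofPred_eq] at hx ⊢
    omega
  · intro x hx y hy hxy
    simp only [f, Set.mem_ofPred_eq, Prod.mk.injEq] at hx hy hxy
    ext i
    fin_cases i <;> simp only [Fin.zero_eta, Fin.mk_one, Fin.reduceFinMk] <;> omega
  · rintro ⟨a, b⟩ h
    simp only [Set.mem_ofPred_eq] at h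
    refine ⟨![(s - a - b).toNat, (a - 2 * b - 1).toNat, (b - 1).toNat], ?_, ?_⟩
    · simp only [Set.mem_ofPred_eq, Matrix.cons_val]
      omega
    · simp only [f, Matrix.cons_val, Prod.mk.injEq]
      omega

theorem ncard_flatCone (s : ℕ) :
    (flatCone s).ncard = {x : Fin 3 → ℕ | 5 + ∑ i, ![1, 2, 3] i * x i = s}.ncard := by
  symm
  -- Here the edges are spanned by `(1, 1)` and `(2, 1)`.
  let f (x : Fin 3 → ℕ) : ℤ × ℤ := (x 1 + 2 * x 2 + 3, x 1 + x 2 + 2)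
  simp only [flatCone, Fin.sum_univ_three, Matrix.cons_val]
  refine Set.BijOn.ncard_eq (f := f) ⟨?_, ?_, ?_⟩
  · intro x hx
    simp only [f, Set.mem_ofPred_eq] at hx ⊢
    omega
  · intro x hx y hy hxy
    simp only [f, Set.mem_ofPred_eq, Prod.mk.injEq] at hx hy hxy
    ext i
    fin_cases i <;> simp only [Fin.zero_eta, Fin.mk_one, Fin.reduceFinMk] <;> omega
  · rintro ⟨a, b⟩ h
    simp only [Set.mem_ofPred_eq] at h
    refine ⟨![(s - a - b).toNat, (2 * b - a - 1).toNat, (a - b - 1).toNat], ?_, ?_⟩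
    · simp only [Set.mem_ofPred_eq, Matrix.cons_val]
      omega
    · simp only [f, Matrix.cons_val, Prod.mk.injEq]
      omega

theorem ncard_isMagic_eq_eight_mul (s : ℕ) :
    {M | IsMagic M (3 * s)}.ncard = 8 * ((steepCone s).ncard + (flatCone s).ncard) := by
  have hfinite := Set.finite_union.1 (finite_steepCone_union_flatCone s)
  rw [ncard_isMagic, ncard_admissibleOffsets, sep_admissibleOffsets_eq_union,
    Set.ncard_union_eq (disjoint_steepCone_flatCone s) hfinite.1 hfinite.2]

open PowerSeries in
/-- Generating function identity: if `c s` counts the magic squares of order 3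
with magic number `3s`, then
`(1−t)(1−t²)(1−t³) Σ c(s) tˢ = 8t⁴(1+2t)` as formal power series over `ℤ`. -/
theorem magic_square_generating_function (c : ℕ → ℕ)
    (hc : ∀ s, c s = {M : Matrix (Fin 3) (Fin 3) ℕ | IsMagic M (3 * s)}.ncard) :
    (1 - (X : PowerSeries ℤ)) * (1 - X ^ 2) * (1 - X ^ 3) *
        PowerSeries.mk (fun s => (c s : ℤ)) =
      8 * X ^ 4 * (1 + 2 * X) := by
  have hsplit : PowerSeries.mk (fun s => (c s : ℤ)) =
      8 * (PowerSeries.mk (fun s => ((steepCone s).ncard : ℤ)) +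
        PowerSeries.mk fun s => ((flatCone s).ncard : ℤ)) := by
    ext s
    rw [← map_ofNat C 8, coeff_C_mul]
    simp [hc, ncard_isMagic_eq_eight_mul]
  have hsteep := prod_one_sub_X_pow_mul_mk_ncard (R := ℤ) (w := ![1, 1, 3]) (by decide) 4
  have hflat := prod_one_sub_X_pow_mul_mk_ncard (R := ℤ) (w := ![1, 2, 3]) (by decide) 5
  simp only [← ncard_steepCone, ← ncard_flatCone, Fin.prod_univ_three, Matrix.cons_val, pow_one]
    at hsteep hflat
  rw [hsplit]
  linear_combination 8 * (1 + X) * hsteep + 8 * hflat
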